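/- arXiv:2408.07209 — 2 statements merged into one kernel-verified Lean document; each statement's English description precedes it below -/
import Mathlib

section
/- For any fixed s ∈ Int(S_d), A_b(s) = b^{−d/2} ψ_∅(s) (1 + O_s(b)) as b → 0; in particular, b^{d/2} A_b(s) → ψ_∅(s) = {(4π)^d (1−‖s‖₁) ∏_{i=1}^d s_i}^{−1/2} as b → 0, where A_b(s) = ∫_{S_d} κ_{s,b}(x)² dx. -/
open MeasureTheory ProbabilityTheory Real Filter Finset Matrix

noncomputable section

/-- The unit simplex `S_d = {x ∈ [0,1]^d : x_1 + … + x_d ≤ 1}`. -/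
def Sd (d : ℕ) : Set (Fin d → ℝ) :=
  {x | (∀ i, 0 ≤ x i ∧ x i ≤ 1) ∧ ∑ i, x i ≤ 1}

/-- The interior of the unit simplex. -/
def SdInt (d : ℕ) : Set (Fin d → ℝ) :=
  {x | (∀ i, 0 < x i) ∧ ∑ i, x i < 1}

/-- The Dirichlet(u, v) density on the simplex. -/
def Kdir {d : ℕ} (u : Fin d → ℝ) (v : ℝ) (x : Fin d → ℝ) : ℝ :=
  (Gamma ((∑ i, u i) + v) / (Gamma v * ∏ i, Gamma (u i))) *
    (1 - ∑ i, x i) ^ (v - 1) * ∏ i, (x i) ^ (u i - 1)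

/-- The locally adaptive Dirichlet kernel `κ_{s,b}`. -/
def kappa {d : ℕ} (s : Fin d → ℝ) (b : ℝ) : (Fin d → ℝ) → ℝ :=
  Kdir (fun i => s i / b + 1) ((1 - ∑ i, s i) / b + 1)

/-- `A_b(s) = ∫_{S_d} κ_{s,b}(x)² dx`. -/
def Adir {d : ℕ} (b : ℝ) (s : Fin d → ℝ) : ℝ :=
  ∫ x in Sd d, (kappa s b x) ^ 2

/-- Second partial derivative `∂² m / ∂ s_k ∂ s_ℓ` at `s`. -/
def d2 {d : ℕ} (m : (Fin d → ℝ) → ℝ) (k l : Fin d) (s : Fin d → ℝ) : ℝ :=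
  fderiv ℝ (fun x => fderiv ℝ m x (Pi.single l 1)) s (Pi.single k 1)

/-- The function `h_J(s)` from the paper. -/
def hJfun {d : ℕ} (m : (Fin d → ℝ) → ℝ) (J : Finset (Fin d)) (lam : Fin d → ℝ)
    (s : Fin d → ℝ) : ℝ :=
  if J = Finset.univ then
    ∑ k, ∑ l, (1 / 2 : ℝ) * ((lam k + 1) * (if k = l then 1 else 0) + 1) * d2 m k l s
  else
    ∑ k ∈ Jᶜ, ∑ l ∈ Jᶜ, (1 / 2 : ℝ) * ((if k = l then s k else 0) - s k * s l) * d2 m k l s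

/-- The function `ψ_J(s)` from the paper. -/
def psiJ {d : ℕ} (J : Finset (Fin d)) (s : Fin d → ℝ) : ℝ :=
  ((4 * π) ^ ((d : ℝ) - J.card) * (1 - ∑ i, s i) * ∏ i ∈ Jᶜ, s i) ^ (-(1 : ℝ) / 2)

/-- The product `∏_{i ∈ J} Γ(2λ_i+1) / (2^{2λ_i+1} Γ(λ_i+1)²)`. -/
def gamProd {d : ℕ} (J : Finset (Fin d)) (lam : Fin d → ℝ) : ℝ :=
  ∏ i ∈ J, Gamma (2 * lam i + 1) / ((2 : ℝ) ^ (2 * lam i + 1) * Gamma (lam i + 1) ^ 2)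

/-- The local linear smoother with Dirichlet kernel. -/
def mLL {d n : ℕ} (b : ℝ) (X : Fin n → Fin d → ℝ) (Y : Fin n → ℝ) (s : Fin d → ℝ) : ℝ :=
  let 𝒳 : Matrix (Fin n) (Fin (d + 1)) ℝ :=
    Matrix.of fun i => Fin.cases 1 (fun k => X i k - s k)
  let W : Matrix (Fin n) (Fin n) ℝ := Matrix.diagonal fun i => kappa s b (X i)
  ((𝒳ᵀ * W * 𝒳)⁻¹ *ᵥ (𝒳ᵀ *ᵥ (W *ᵥ Y))) 0

/-- The Nadaraya–Watson estimator with Dirichlet kernel. -/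
def mNW {d n : ℕ} (b : ℝ) (X : Fin n → Fin d → ℝ) (Y : Fin n → ℝ) (s : Fin d → ℝ) : ℝ :=
  (∑ i, Y i * kappa s b (X i)) / ∑ j, kappa s b (X j)

/-- Central second moment `C_b(s; k, ℓ)` of the Dirichlet kernel. -/
def CbM {d : ℕ} (b : ℝ) (s : Fin d → ℝ) (k l : Fin d) : ℝ :=
  ∫ x in Sd d, (x k - s k) * (x l - s l) * kappa s b x

end

section helpers

lemma hp_Gamma_mid {x : ℝ} (hx : 0 < x) :
    Gamma (x + 1 / 2) ^ 2 ≤ Gamma x * Gamma (x + 1) := by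
  have h := Real.Gamma_mul_add_mul_le_rpow_Gamma_mul_rpow_Gamma (s := x) (t := x + 1)
    (a := 1 / 2) (b := 1 / 2) hx (by linarith) (by norm_num) (by norm_num) (by norm_num)
  have e : (1 / 2 : ℝ) * x + 1 / 2 * (x + 1) = x + 1 / 2 := by ring
  rw [e, ← Real.sqrt_eq_rpow, ← Real.sqrt_eq_rpow] at h
  have p1 := Gamma_pos_of_pos hx
  have p2 := Gamma_pos_of_pos (show 0 < x + 1 by linarith)
  have p3 := Gamma_pos_of_pos (show 0 < x + 1 / 2 by linarith)
  calc Gamma (x + 1 / 2) ^ 2 ≤ (√(Gamma x) * √(Gamma (x + 1))) ^ 2 := by gcongr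
    _ = _ := by rw [mul_pow, Real.sq_sqrt p1.le, Real.sq_sqrt p2.le]

/-- normalised Gamma ratio -/
noncomputable def hpr (x : ℝ) : ℝ := √x * (Gamma (x + 1 / 2) / Gamma (x + 1))

lemma hpr_pos {x : ℝ} (hx : 0 < x) : 0 < hpr x := by
  have p2 := Gamma_pos_of_pos (show 0 < x + 1 by linarith)
  have p3 := Gamma_pos_of_pos (show 0 < x + 1 / 2 by linarith)
  unfold hpr
  positivity

lemma hpr_sq_le {x : ℝ} (hx : 0 < x) : hpr x ^ 2 ≤ 1 := by
  have p2 := Gamma_pos_of_pos (show 0 < x + 1 by linarith)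
  have h := hp_Gamma_mid hx
  have e := Gamma_add_one hx.ne'
  unfold hpr
  rw [mul_pow, Real.sq_sqrt hx.le, div_pow, ← mul_div_assoc, div_le_one (by positivity)]
  calc x * Gamma (x + 1 / 2) ^ 2 ≤ x * (Gamma x * Gamma (x + 1)) := by gcongr
    _ = Gamma (x + 1) ^ 2 := by rw [e]; ring

lemma hpr_sq_ge {x : ℝ} (hx : 0 < x) : x / (x + 1 / 2) ≤ hpr x ^ 2 := by
  have p2 := Gamma_pos_of_pos (show 0 < x + 1 by linarith)
  have h := hp_Gamma_mid (show 0 < x + 1 / 2 by linarith)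
  have e := Gamma_add_one (show x + 1 / 2 ≠ 0 by linarith)
  rw [e, show x + 1 / 2 + 1 / 2 = x + 1 by ring] at h
  unfold hpr
  rw [mul_pow, Real.sq_sqrt hx.le, div_pow, ← mul_div_assoc, div_le_div_iff₀ (by positivity) (by positivity)]
  calc x * Gamma (x + 1) ^ 2 ≤ x * (Gamma (x + 1 / 2) * ((x + 1 / 2) * Gamma (x + 1 / 2))) := by
        gcongr
    _ = _ := by ring

lemma hpr_le {x : ℝ} (hx : 0 < x) : hpr x ≤ 1 := by
  have := hpr_sq_le hx
  have := hpr_pos hx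
  nlinarith

lemma hpr_ge {x : ℝ} (hx : 0 < x) : 1 - 1 / (2 * x) ≤ hpr x := by
  have h1 := hpr_sq_ge hx
  have h2 := hpr_le hx
  have h3 := hpr_pos hx
  have h4 : hpr x ^ 2 ≤ hpr x := by nlinarith
  have h5 : 1 - 1 / (2 * x) ≤ x / (x + 1 / 2) := by
    rw [sub_le_iff_le_add, div_add_div _ _ (by positivity) (by positivity), le_div_iff₀ (by positivity)]
    nlinarith
  linarith

lemma hp_central {x : ℝ} (hx : 0 < x) :
    Gamma (2 * x + 1) / Gamma (x + 1) ^ 2 = 4 ^ x / (√π * √x) * hpr x := by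
  have p2 := Gamma_pos_of_pos (show 0 < x + 1 by linarith)
  have h := Real.Gamma_mul_Gamma_add_half (x + 1 / 2)
  rw [show x + 1 / 2 + 1 / 2 = x + 1 by ring, show 2 * (x + 1 / 2) = 2 * x + 1 by ring,
    show 1 - (2 * x + 1) = -(2 * x) by ring, Real.rpow_neg (by norm_num),
    Real.rpow_mul (by norm_num)] at h
  norm_num at h
  have hsx : 0 < √x := Real.sqrt_pos.2 hx
  have hp : 0 < √π := Real.sqrt_pos.2 Real.pi_pos
  have h4 : (0 : ℝ) < 4 ^ x := by positivity
  unfold hpr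
  norm_num
  field_simp at h ⊢
  linarith

lemma hp_Gamma_add (N : ℝ) (hN : 0 < N) (n : ℕ) :
    Gamma (N + n + 1) = Gamma (N + 1) * ∏ j ∈ range n, (N + j + 1) := by
  induction n with
  | zero => simp
  | succ n ih =>
    rw [prod_range_succ, ← mul_assoc, ← ih]
    push_cast
    rw [← add_assoc N, Gamma_add_one (by positivity)]
    ring

/-- the class `1 + O(b)` -/
def hpQ (f : ℝ → ℝ) : Prop :=
  (fun b => f b - 1) =O[nhdsWithin 0 (Set.Ioi 0)] (fun b : ℝ => b)

lemma hpQ.tendsto {f : ℝ → ℝ} (h : hpQ f) : Tendsto f (nhdsWithin 0 (Set.Ioi 0)) (nhds 1) := by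
  have h0 : Tendsto (fun b : ℝ => b) (nhdsWithin 0 (Set.Ioi 0)) (nhds 0) :=
    tendsto_id.mono_left nhdsWithin_le_nhds
  have := (Asymptotics.IsBigO.trans_tendsto h h0).add_const 1
  simpa using this

lemma hpQ.mul {f g : ℝ → ℝ} (hf : hpQ f) (hg : hpQ g) : hpQ (fun b => f b * g b) := by
  have h1 : (fun b => f b * (g b - 1)) =O[nhdsWithin 0 (Set.Ioi 0)] (fun b : ℝ => b) := by
    simpa using (hf.tendsto.isBigO_one ℝ).mul hg
  have := h1.add hf
  refine this.congr_left fun b => ?_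
  ring

lemma hpQ.inv {f : ℝ → ℝ} (hf : hpQ f) : hpQ (fun b => (f b)⁻¹) := by
  have h0 := hf.tendsto.inv₀ one_ne_zero
  have h1 : (fun b => (f b)⁻¹ * (f b - 1)) =O[nhdsWithin 0 (Set.Ioi 0)] (fun b : ℝ => b) := by
    simpa using (h0.isBigO_one ℝ).mul hf
  refine h1.neg_left.congr' ?_ EventuallyEq.rfl
  filter_upwards [hf.tendsto.eventually_ne one_ne_zero] with b hb
  field_simp
  ring

lemma hpQ.one : hpQ (fun _ => 1) := by
  simp [hpQ, Asymptotics.isBigO_zero]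

lemma hpQ.prod {ι : Type*} (S : Finset ι) {f : ι → ℝ → ℝ} (h : ∀ i ∈ S, hpQ (f i)) :
    hpQ (fun b => ∏ i ∈ S, f i b) := by
  classical
  induction S using Finset.induction_on with
  | empty => simpa using hpQ.one
  | insert a S ha ih =>
    simp only [prod_insert ha]
    exact (h a (by simp)).mul (ih fun i hi => h i (by simp [hi]))

lemma hpQ.lin (c : ℝ) : hpQ (fun b => 1 + c * b) := by
  unfold hpQ
  simp only [add_sub_cancel_left]
  exact Asymptotics.isBigO_const_mul_self c _ _

lemma hpQ.hpr {s : ℝ} (hs : 0 < s) : hpQ (fun b => hpr (s / b)) := by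
  refine Asymptotics.IsBigO.of_bound (1 / (2 * s)) ?_
  filter_upwards [self_mem_nhdsWithin] with b hb
  have hb : 0 < b := hb
  have hx : 0 < s / b := by positivity
  have h1 := hpr_le hx
  have h2 := hpr_ge hx
  rw [Real.norm_eq_abs, Real.norm_eq_abs, abs_of_pos hb, abs_of_nonpos (by linarith)]
  have : 1 / (2 * (s / b)) = 1 / (2 * s) * b := by field_simp
  linarith

lemma hp_beta {a c t : ℝ} (ha : 0 < a) (hc : 0 < c) (ht : 0 < t) :
    ∫⁻ x in Set.Ioo 0 t, ENNReal.ofReal (x ^ (a - 1) * (t - x) ^ (c - 1)) =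
      ENNReal.ofReal (Gamma a * Gamma c / Gamma (a + c) * t ^ (a + c - 1)) := by
  have hpos : 0 < Gamma a * Gamma c / Gamma (a + c) * t ^ (a + c - 1) := by
    have := Gamma_pos_of_pos ha
    have := Gamma_pos_of_pos hc
    have := Gamma_pos_of_pos (add_pos ha hc)
    positivity
  have key : ∫ x in Set.Ioo 0 t, x ^ (a - 1) * (t - x) ^ (c - 1) =
      Gamma a * Gamma c / Gamma (a + c) * t ^ (a + c - 1) := by
    have h := Complex.betaIntegral_scaled a c ht
    rw [Complex.betaIntegral_eq_Gamma_mul_div _ _ (by simpa) (by simpa),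
      intervalIntegral.integral_of_le ht.le, integral_Ioc_eq_integral_Ioo] at h
    apply Complex.ofReal_injective
    rw [← integral_complex_ofReal]
    trans ((t : ℂ) ^ ((a : ℂ) + c - 1) * (Complex.Gamma a * Complex.Gamma c / Complex.Gamma (a + c)))
    · rw [← h]
      refine setIntegral_congr_fun measurableSet_Ioo fun x hx => ?_
      have h1 : 0 ≤ x := hx.1.le
      have h2 : 0 ≤ t - x := by linarith [hx.2]
      simp only [Complex.ofReal_mul]
      rw [Complex.ofReal_cpow h1, Complex.ofReal_cpow h2]
      push_cast
      rfl
    · push_cast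
      rw [Complex.ofReal_cpow ht.le, ← Complex.Gamma_ofReal, ← Complex.Gamma_ofReal,
        ← Complex.Gamma_ofReal]
      push_cast
      ring
  rw [← key, ofReal_integral_eq_lintegral_ofReal]
  · by_contra hni
    rw [integral_undef hni] at key
    linarith
  · filter_upwards [ae_restrict_mem measurableSet_Ioo] with x hx
    have h1 : 0 < x := hx.1
    have h2 : 0 < t - x := by linarith [hx.2]
    show 0 ≤ _
    positivity

/-- open scaled simplex -/
def hpS (d : ℕ) (t : ℝ) : Set (Fin d → ℝ) := {x | (∀ i, 0 < x i) ∧ ∑ i, x i < t}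

/-- Dirichlet integrand on the open scaled simplex -/
noncomputable def hpF {d : ℕ} (u : Fin d → ℝ) (v : ℝ) (t : ℝ) (x : Fin d → ℝ) : ENNReal :=
  (hpS d t).indicator
    (fun x => ENNReal.ofReal ((t - ∑ i, x i) ^ (v - 1) * ∏ i, (x i) ^ (u i - 1))) x

lemma hpS_meas (d : ℕ) (t : ℝ) : MeasurableSet (hpS d t) := by
  have : hpS d t = (⋂ i, {x | 0 < x i}) ∩ {x | ∑ i, x i < t} := by
    ext x; simp [hpS]
  rw [this]
  refine MeasurableSet.inter (MeasurableSet.iInter fun i => ?_) ?_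
  · exact measurableSet_lt measurable_const (measurable_pi_apply i)
  · exact measurableSet_lt (by fun_prop) measurable_const

lemma hpF_meas {d : ℕ} (u : Fin d → ℝ) (v t : ℝ) : Measurable (hpF u v t) := by
  unfold hpF
  refine Measurable.indicator ?_ (hpS_meas d t)
  fun_prop

lemma hpF_cons {d : ℕ} (u : Fin (d + 1) → ℝ) (v t y : ℝ) (x : Fin d → ℝ) :
    hpF u v t (Fin.cons y x) = (Set.Ioo 0 t).indicator
      (fun y => ENNReal.ofReal (y ^ (u 0 - 1)) * hpF (fun i => u i.succ) v (t - y) x) y := by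
  by_cases hy : y ∈ Set.Ioo 0 t
  · rw [Set.indicator_of_mem hy]
    unfold hpF
    by_cases hx : x ∈ hpS d (t - y)
    · have hx' : (Fin.cons y x : Fin (d + 1) → ℝ) ∈ hpS (d + 1) t := by
        refine ⟨fun i => ?_, ?_⟩
        · refine Fin.cases ?_ (fun j => ?_) i
          · simpa using hy.1
          · simpa using hx.1 j
        · rw [Fin.sum_univ_succ]; simp; linarith [hx.2]
      rw [Set.indicator_of_mem hx, Set.indicator_of_mem hx', ← ENNReal.ofReal_mul (Real.rpow_nonneg hy.1.le _)]
      congr 1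
      rw [Fin.sum_univ_succ, Fin.prod_univ_succ]
      simp only [Fin.cons_zero, Fin.cons_succ]
      rw [sub_sub]
      ring
    · have hx' : (Fin.cons y x : Fin (d + 1) → ℝ) ∉ hpS (d + 1) t := by
        rintro ⟨h1, h2⟩
        apply hx
        refine ⟨fun i => by simpa using h1 i.succ, ?_⟩
        rw [Fin.sum_univ_succ] at h2
        simp at h2
        linarith
      rw [Set.indicator_of_notMem hx, Set.indicator_of_notMem hx', mul_zero]
  · rw [Set.indicator_of_notMem hy]
    unfold hpF
    rw [Set.indicator_of_notMem]
    rintro ⟨h1, h2⟩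
    apply hy
    refine ⟨by simpa using h1 0, ?_⟩
    rw [Fin.sum_univ_succ] at h2
    simp only [Fin.cons_zero, Fin.cons_succ] at h2
    have : 0 ≤ ∑ i, x i := sum_nonneg fun i _ => by simpa using (h1 i.succ).le
    linarith

lemma hp_dirichlet (d : ℕ) : ∀ (u : Fin d → ℝ) (v t : ℝ), (∀ i, 0 < u i) → 0 < v → 0 < t →
    ∫⁻ x, hpF u v t x = ENNReal.ofReal
      (Gamma v * (∏ i, Gamma (u i)) / Gamma ((∑ i, u i) + v) * t ^ ((∑ i, u i) + v - 1)) := by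
  induction d with
  | zero =>
    intro u v t hu hv ht
    have hG := (Gamma_pos_of_pos hv).ne'
    have : ∀ x, hpF u v t x = ENNReal.ofReal (t ^ (v - 1)) := by
      intro x
      unfold hpF
      rw [Set.indicator_of_mem]
      · simp
      · exact ⟨fun i => i.elim0, by simpa using ht⟩
    simp only [this]
    rw [lintegral_const]
    simp [volume_pi, hG]
  | succ d ih =>
    intro u v t hu hv ht
    set U : ℝ := ∑ i : Fin d, u i.succ with hU
    have hU0 : 0 ≤ U := sum_nonneg fun i _ => (hu _).le
    have hUv : 0 < U + v := by linarith
    have mp := (volume_preserving_piFinSuccAbove (fun _ : Fin (d + 1) => ℝ) 0).symm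
    have hm : Measurable (fun z => hpF u v t
        ((MeasurableEquiv.piFinSuccAbove (fun _ : Fin (d + 1) => ℝ) 0).symm z)) :=
      (hpF_meas u v t).comp (MeasurableEquiv.measurable _)
    rw [← mp.lintegral_comp_emb (MeasurableEquiv.measurableEmbedding _), Measure.volume_eq_prod,
      lintegral_prod _ hm.aemeasurable]
    have e : ∀ (y : ℝ) (x : Fin d → ℝ),
        (MeasurableEquiv.piFinSuccAbove (fun _ : Fin (d + 1) => ℝ) 0).symm (y, x) = Fin.cons y x := by
      intro y x
      simp [MeasurableEquiv.piFinSuccAbove, Fin.insertNthEquiv]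
    simp only [e, hpF_cons]
    have e2 : ∀ y : ℝ, ∫⁻ x : Fin d → ℝ, (Set.Ioo 0 t).indicator
        (fun y => ENNReal.ofReal (y ^ (u 0 - 1)) * hpF (fun i => u i.succ) v (t - y) x) y =
        (Set.Ioo 0 t).indicator (fun y => ENNReal.ofReal
          (Gamma v * (∏ i : Fin d, Gamma (u i.succ)) / Gamma (U + v)) *
            ENNReal.ofReal (y ^ (u 0 - 1) * (t - y) ^ ((U + v) - 1))) y := by
      intro y
      by_cases hy : y ∈ Set.Ioo 0 t
      · simp only [Set.indicator_of_mem hy]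
        have p1 := Gamma_pos_of_pos hv
        have p2 := Gamma_pos_of_pos hUv
        have p3 : 0 < ∏ i : Fin d, Gamma (u i.succ) := prod_pos fun i _ => Gamma_pos_of_pos (hu _)
        rw [lintegral_const_mul _ (hpF_meas _ _ _), ih _ _ _ (fun i => hu _) hv (by linarith [hy.2]),
          ← ENNReal.ofReal_mul (Real.rpow_nonneg hy.1.le _), ← ENNReal.ofReal_mul (by positivity)]
        congr 1
        ring
      · simp only [Set.indicator_of_notMem hy, lintegral_zero]
    simp only [e2]
    rw [lintegral_indicator measurableSet_Ioo, lintegral_const_mul' _ _ ENNReal.ofReal_ne_top,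
      hp_beta (hu 0) hUv ht]
    have p1 := Gamma_pos_of_pos hv
    have p2 := Gamma_pos_of_pos hUv
    have p3 : 0 < ∏ i : Fin d, Gamma (u i.succ) := prod_pos fun i _ => Gamma_pos_of_pos (hu _)
    rw [← ENNReal.ofReal_mul (by positivity)]
    congr 1
    rw [Fin.sum_univ_succ, Fin.prod_univ_succ, ← hU, ← add_assoc]
    field_simp

lemma hp_Sd_meas (d : ℕ) : MeasurableSet (Sd d) := by
  have : Sd d = (⋂ i, {x | 0 ≤ x i ∧ x i ≤ 1}) ∩ {x | ∑ i, x i ≤ 1} := by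
    ext x; simp [Sd]
  rw [this]
  refine MeasurableSet.inter (MeasurableSet.iInter fun i => ?_) ?_
  · exact (measurableSet_le measurable_const (measurable_pi_apply i)).inter
      (measurableSet_le (measurable_pi_apply i) measurable_const)
  · exact measurableSet_le (by fun_prop) measurable_const

lemma hp_kappa {d : ℕ} {s : Fin d → ℝ} (hs : s ∈ SdInt d) {b : ℝ} (hb : 0 < b) (x : Fin d → ℝ) :
    (Sd d).indicator (fun x => (kappa s b x) ^ 2) x =
      (Gamma (1 / b + d + 1) / (Gamma ((1 - ∑ i, s i) / b + 1) * ∏ i, Gamma (s i / b + 1))) ^ 2 *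
      (hpF (fun i => 2 * (s i / b) + 1) (2 * ((1 - ∑ i, s i) / b) + 1) 1 x).toReal := by
  have hs0 : 0 < 1 - ∑ i, s i := by linarith [hs.2]
  have hsum : ∑ i, (s i / b + 1) + ((1 - ∑ i, s i) / b + 1) = 1 / b + d + 1 := by
    rw [sum_add_distrib, ← sum_div]
    simp
    ring
  by_cases hx : x ∈ Sd d
  · rw [Set.indicator_of_mem hx]
    have h1 : 0 ≤ 1 - ∑ i, x i := by linarith [hx.2]
    have h2 : ∀ i, 0 ≤ x i := fun i => (hx.1 i).1
    have key : kappa s b x ^ 2 =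
        (Gamma (1 / b + d + 1) / (Gamma ((1 - ∑ i, s i) / b + 1) * ∏ i, Gamma (s i / b + 1))) ^ 2 *
        ((1 - ∑ i, x i) ^ (2 * ((1 - ∑ i, s i) / b)) * ∏ i, (x i) ^ (2 * (s i / b))) := by
      unfold kappa Kdir
      rw [hsum]
      simp only [add_sub_cancel_right]
      rw [mul_assoc, mul_pow, mul_pow, ← prod_pow]
      congr 2
      · rw [mul_comm 2, Real.rpow_mul h1, Real.rpow_two]
      · refine prod_congr rfl fun i _ => ?_
        rw [mul_comm 2, Real.rpow_mul (h2 i), Real.rpow_two]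
    rw [key]
    congr 1
    unfold hpF
    by_cases hx' : x ∈ hpS d 1
    · rw [Set.indicator_of_mem hx', ENNReal.toReal_ofReal]
      · simp only [add_sub_cancel_right]
      · have : 0 ≤ ∏ i, (x i) ^ (2 * (s i / b) + 1 - 1) :=
          prod_nonneg fun i _ => Real.rpow_nonneg (h2 i) _
        positivity
    · rw [Set.indicator_of_notMem hx', ENNReal.toReal_zero]
      by_cases hz : ∃ i, x i = 0
      · obtain ⟨i, hi⟩ := hz
        have : ∏ i, (x i) ^ (2 * (s i / b)) = 0 := by
          refine prod_eq_zero (mem_univ i) ?_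
          have := hs.1 i
          rw [hi, Real.zero_rpow (by positivity)]
        rw [this, mul_zero]
      · push Not at hz
        have h3 : 1 - ∑ i, x i = 0 := by
          by_contra hne
          apply hx'
          refine ⟨fun i => lt_of_le_of_ne (h2 i) (hz i).symm, ?_⟩
          have := lt_of_le_of_ne h1 (Ne.symm hne)
          linarith
        rw [h3, Real.zero_rpow (by positivity), zero_mul]
  · rw [Set.indicator_of_notMem hx]
    have hx' : x ∉ hpS d 1 := by
      rintro ⟨h1, h2⟩
      apply hx
      refine ⟨fun i => ⟨(h1 i).le, ?_⟩, h2.le⟩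
      have := single_le_sum (f := x) (fun i _ => (h1 i).le) (mem_univ i)
      linarith
    unfold hpF
    rw [Set.indicator_of_notMem hx']
    simp

lemma hp_Adir {d : ℕ} {s : Fin d → ℝ} (hs : s ∈ SdInt d) {b : ℝ} (hb : 0 < b) :
    Adir b s =
      (Gamma (1 / b + d + 1) / (Gamma ((1 - ∑ i, s i) / b + 1) * ∏ i, Gamma (s i / b + 1))) ^ 2 *
      (Gamma (2 * ((1 - ∑ i, s i) / b) + 1) * (∏ i, Gamma (2 * (s i / b) + 1)) /
        Gamma (2 * (1 / b) + d + 1)) := by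
  have hs0 : 0 < 1 - ∑ i, s i := by linarith [hs.2]
  have hsp := hs.1
  have hsum : ∑ i, (2 * (s i / b) + 1) + (2 * ((1 - ∑ i, s i) / b) + 1) = 2 * (1 / b) + d + 1 := by
    rw [sum_add_distrib, ← mul_sum, ← sum_div]
    simp
    ring
  have hu : ∀ i, 0 < 2 * (s i / b) + 1 := fun i => by
    have := hsp i
    positivity
  unfold Adir
  rw [← integral_indicator (hp_Sd_meas d)]
  simp only [hp_kappa hs hb]
  rw [integral_const_mul, integral_toReal (hpF_meas _ _ _).aemeasurable,
    hp_dirichlet d _ _ 1 hu (by positivity) one_pos, hsum]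
  · rw [ENNReal.toReal_ofReal, Real.one_rpow, mul_one]
    have p1 := Gamma_pos_of_pos (show 0 < 2 * ((1 - ∑ i, s i) / b) + 1 by positivity)
    have p2 := Gamma_pos_of_pos (show 0 < 2 * (1 / b) + d + 1 by positivity)
    have p3 : 0 < ∏ i, Gamma (2 * (s i / b) + 1) := prod_pos fun i _ => Gamma_pos_of_pos (hu _)
    positivity
  · refine Eventually.of_forall fun x => ?_
    unfold hpF
    by_cases hx : x ∈ hpS d 1
    · rw [Set.indicator_of_mem hx]; exact ENNReal.ofReal_lt_top
    · rw [Set.indicator_of_notMem hx]; simp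

/-- the relative error -/
noncomputable def hpE {d : ℕ} (s : Fin d → ℝ) (b : ℝ) : ℝ :=
  hpr ((1 - ∑ i, s i) / b) * (∏ i, hpr (s i / b)) * (hpr (1 / b))⁻¹ *
    ∏ j ∈ range d, ((1 + ((j : ℝ) + 1) * b) * (1 + ((j : ℝ) + 1) * b) *
      (1 + (((j : ℝ) + 1) / 2) * b)⁻¹)

lemma hpE_Q {d : ℕ} {s : Fin d → ℝ} (hs : s ∈ SdInt d) : hpQ (hpE s) := by
  have hs0 : 0 < 1 - ∑ i, s i := by linarith [hs.2]
  refine (((hpQ.hpr hs0).mul (hpQ.prod _ fun i _ => hpQ.hpr (hs.1 i))).mul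
    (hpQ.hpr one_pos).inv).mul (hpQ.prod _ fun j _ => ?_)
  exact ((hpQ.lin _).mul (hpQ.lin _)).mul (hpQ.lin _).inv

lemma hp_psi {d : ℕ} {s : Fin d → ℝ} (hs : s ∈ SdInt d) :
    psiJ (∅ : Finset (Fin d)) s = ((2 * √π) ^ d * √(1 - ∑ i, s i) * ∏ i, √(s i))⁻¹ := by
  have hs0 : 0 < 1 - ∑ i, s i := by linarith [hs.2]
  have hsp : ∀ i, 0 ≤ s i := fun i => (hs.1 i).le
  have hpr0 : 0 ≤ ∏ i, s i := prod_nonneg fun i _ => hsp i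
  unfold psiJ
  simp only [card_empty, Nat.cast_zero, sub_zero, compl_empty, Real.rpow_natCast]
  rw [neg_div, Real.rpow_neg (by positivity), ← Real.sqrt_eq_rpow, Real.sqrt_mul (by positivity),
    Real.sqrt_mul (by positivity), Real.sqrt_prod _ (fun i _ => hsp i)]
  congr 3
  rw [show (4 * π) ^ d = ((2 * √π) ^ d) ^ 2 by
    rw [← pow_mul, mul_comm d, pow_mul, mul_pow 2 (√π) 2, Real.sq_sqrt Real.pi_pos.le]; norm_num]
  exact Real.sqrt_sq (by positivity)

lemma hp_rpow_half (d : ℕ) {b : ℝ} (hb : 0 < b) : b ^ ((d : ℝ) / 2) = √b ^ d := by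
  rw [Real.sqrt_eq_rpow, ← Real.rpow_natCast, ← Real.rpow_mul hb.le]
  congr 1
  ring

lemma hp_main {d : ℕ} {s : Fin d → ℝ} (hs : s ∈ SdInt d) {b : ℝ} (hb : 0 < b) :
    Adir b s = b ^ (-(d : ℝ) / 2) * psiJ (∅ : Finset (Fin d)) s * hpE s b := by
  have hs0 : 0 < 1 - ∑ i, s i := by linarith [hs.2]
  have hsp := hs.1
  rw [hp_Adir hs hb, hp_psi hs, neg_div, Real.rpow_neg hb.le, hp_rpow_half d hb]
  set s0 := 1 - ∑ i, s i with hs0def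
  have hN : 0 < 1 / b := by positivity
  have h2N : 0 < 2 * (1 / b) := by positivity
  rw [hp_Gamma_add _ hN, hp_Gamma_add _ h2N]
  have c0 := hp_central (show 0 < s0 / b by positivity)
  have cN := hp_central hN
  have ci : (∏ i, Gamma (2 * (s i / b) + 1)) / (∏ i, Gamma (s i / b + 1)) ^ 2 =
      (∏ i, (4 : ℝ) ^ (s i / b)) * (√b ^ d / (√π ^ d * ∏ i, √(s i))) * ∏ i, hpr (s i / b) := by
    rw [← prod_pow, ← prod_div_distrib]
    have : ∀ i, Gamma (2 * (s i / b) + 1) / Gamma (s i / b + 1) ^ 2 =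
        (4 : ℝ) ^ (s i / b) * (√b / (√π * √(s i))) * hpr (s i / b) := fun i => by
      have h := hsp i
      rw [hp_central (by positivity), Real.sqrt_div h.le]
      have : 0 < √b := Real.sqrt_pos.2 hb
      have : 0 < √(s i) := Real.sqrt_pos.2 h
      have : 0 < √π := Real.sqrt_pos.2 Real.pi_pos
      field_simp
    simp only [this, prod_mul_distrib, prod_div_distrib, prod_const, card_univ, Fintype.card_fin]
  have h4 : (4 : ℝ) ^ (s0 / b) * ∏ i, (4 : ℝ) ^ (s i / b) = 4 ^ (1 / b) := by
    rw [← Real.rpow_sum_of_pos (by norm_num), ← Real.rpow_add (by norm_num), ← sum_div]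
    congr 1
    rw [hs0def]
    ring
  have hP : (∏ j ∈ range d, (1 / b + (j : ℝ) + 1)) ^ 2 / ∏ j ∈ range d, (2 * (1 / b) + (j : ℝ) + 1) =
      ((2 * b) ^ d)⁻¹ * ∏ j ∈ range d, ((1 + ((j : ℝ) + 1) * b) * (1 + ((j : ℝ) + 1) * b) *
      (1 + (((j : ℝ) + 1) / 2) * b)⁻¹) := by
    rw [← prod_pow, ← prod_div_distrib]
    have : ((2 * b) ^ d)⁻¹ = ∏ j ∈ range d, (2 * b)⁻¹ := by rw [prod_const, card_range, inv_pow]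
    rw [this, ← prod_mul_distrib]
    refine prod_congr rfl fun j _ => ?_
    have : 0 < 1 + ((j : ℝ) + 1) / 2 * b := by positivity
    have : 0 < 2 * (1 / b) + (j : ℝ) + 1 := by positivity
    have : 2 + b * (j + 1) ≠ 0 := by positivity
    have : 2 + (j + 1) * b ≠ 0 := by positivity
    field_simp
    ring
  unfold hpE
  rw [← hs0def]
  set Q := ∏ j ∈ range d, ((1 + ((j : ℝ) + 1) * b) * (1 + ((j : ℝ) + 1) * b) *
      (1 + (((j : ℝ) + 1) / 2) * b)⁻¹)
  have r0 : 0 < hpr (1 / b) := hpr_pos hN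
  have g1 := Gamma_pos_of_pos (show 0 < 1 / b + 1 by positivity)
  have g2 := Gamma_pos_of_pos (show 0 < 2 * (1 / b) + 1 by positivity)
  have sb : 0 < √b := Real.sqrt_pos.2 hb
  have ss0 : 0 < √s0 := Real.sqrt_pos.2 hs0
  have sp : 0 < √π := Real.sqrt_pos.2 Real.pi_pos
  have p3 : 0 < ∏ i, √(s i) := prod_pos fun i _ => Real.sqrt_pos.2 (hsp i)
  have h4p : (0 : ℝ) < 4 ^ (1 / b) := by positivity
  rw [Real.sqrt_div hs0.le] at c0
  rw [Real.sqrt_div zero_le_one, Real.sqrt_one] at cN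
  have hbd : b ^ d = √b ^ d * √b ^ d := by rw [← mul_pow, Real.mul_self_sqrt hb.le]
  calc _ = (Gamma (2 * (s0 / b) + 1) / Gamma (s0 / b + 1) ^ 2) *
        ((∏ i, Gamma (2 * (s i / b) + 1)) / (∏ i, Gamma (s i / b + 1)) ^ 2) *
        (Gamma (2 * (1 / b) + 1) / Gamma (1 / b + 1) ^ 2)⁻¹ *
        ((∏ j ∈ range d, (1 / b + (j : ℝ) + 1)) ^ 2 / ∏ j ∈ range d, (2 * (1 / b) + (j : ℝ) + 1)) := by
        simp only [div_eq_mul_inv, mul_inv, mul_pow, inv_pow, inv_inv]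
        ring
    _ = _ := by
        rw [c0, ci, cN, hP, ← h4, mul_pow, hbd, mul_pow]
        rw [← h4] at h4p
        have q1 : (0 : ℝ) < 4 ^ (s0 / b) := by positivity
        have q2 : 0 < ∏ i, (4 : ℝ) ^ (s i / b) := prod_pos fun i _ => by positivity
        field_simp

end helpers

/-- asymptotics of `A_b(s)` at a fixed interior point. -/
theorem Ab_interior_asymptotics (d : ℕ) (hd : 0 < d) (s : Fin d → ℝ) (hs : s ∈ SdInt d) :
    (∃ C > (0 : ℝ), ∃ b₀ > (0 : ℝ), ∀ b ∈ Set.Ioo (0 : ℝ) b₀,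
      |Adir b s - b ^ (-(d : ℝ) / 2) * psiJ (∅ : Finset (Fin d)) s| ≤
        b ^ (-(d : ℝ) / 2) * psiJ (∅ : Finset (Fin d)) s * (C * b)) ∧
    Tendsto (fun b : ℝ => b ^ ((d : ℝ) / 2) * Adir b s) (nhdsWithin 0 (Set.Ioi 0))
      (nhds (psiJ (∅ : Finset (Fin d)) s)) := by
  have hs0 : 0 < 1 - ∑ i, s i := by linarith [hs.2]
  have hQ := hpE_Q hs
  have hpsi : 0 < psiJ (∅ : Finset (Fin d)) s := by
    rw [hp_psi hs]
    have : 0 < √π := Real.sqrt_pos.2 Real.pi_pos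
    have : 0 < ∏ i, √(s i) := prod_pos fun i _ => Real.sqrt_pos.2 (hs.1 i)
    positivity
  refine ⟨?_, ?_⟩
  · obtain ⟨C, hC, hb⟩ := Asymptotics.IsBigO.exists_pos hQ
    rw [Asymptotics.IsBigOWith, eventually_nhdsWithin_iff, Metric.eventually_nhds_iff] at hb
    obtain ⟨b₀, hb₀, hb⟩ := hb
    refine ⟨C, hC, b₀, hb₀, fun b hbm => ?_⟩
    have hbp : 0 < b := hbm.1
    have h := hb (y := b) (by simpa [abs_of_pos hbp] using hbm.2) hbp
    rw [Real.norm_eq_abs, Real.norm_eq_abs, abs_of_pos hbp] at h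
    rw [hp_main hs hbp]
    have hk : 0 < b ^ (-(d : ℝ) / 2) * psiJ (∅ : Finset (Fin d)) s := by positivity
    rw [← mul_sub_one, abs_mul, abs_of_pos hk]
    gcongr
  · have h := (hQ.tendsto).const_mul (psiJ (∅ : Finset (Fin d)) s)
    rw [mul_one] at h
    refine h.congr' ?_
    filter_upwards [self_mem_nhdsWithin] with b hb
    have hb : 0 < b := hb
    rw [hp_main hs hb, ← mul_assoc, ← mul_assoc, ← Real.rpow_add hb]
    have : (d : ℝ) / 2 + -(d : ℝ) / 2 = 0 := by ring
    rw [this, Real.rpow_zero, one_mul]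
end

section
/- For every fixed s ∈ Int(S_d) and j ∈ {1,…,d}, there exist constants C > 0 and b₀ > 0 such that for all b ∈ (0, b₀), ∫_{S_d} |x_j − s_j|⁶ κ_{s,b}(x) dx ≤ C b³. Moreover, if λ_j ∈ (0,∞) and s = s(b) ∈ Int(S_d) is a sequence with s_j/b → λ_j as b → 0, then there exist constants C' > 0 and b₁ > 0 such that ∫_{S_d} |x_j − s(b)_j|⁶ κ_{s(b),b}(x) dx ≤ C' b⁶ for all b ∈ (0, b₁). -/
open MeasureTheory ProbabilityTheory Real Filter Finset Matrix

lemma beta_scaled_real (p q T : ℝ) (hp : 1 < p) (hq : 1 < q) (hT : 0 < T) :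
    ∫ t in (0:ℝ)..T, t ^ (p - 1) * (T - t) ^ (q - 1) =
      T ^ (p + q - 1) * (Gamma p * Gamma q / Gamma (p + q)) := by
  have h := Complex.betaIntegral_scaled (p : ℂ) (q : ℂ) hT
  have h2 : Complex.betaIntegral (p : ℂ) (q : ℂ) =
      ((Gamma p * Gamma q / Gamma (p + q) : ℝ) : ℂ) := by
    rw [Complex.betaIntegral_eq_Gamma_mul_div _ _ (by simp; linarith) (by simp; linarith)]
    rw [← Complex.ofReal_add, Complex.Gamma_ofReal, Complex.Gamma_ofReal, Complex.Gamma_ofReal]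
    push_cast
    rfl
  have h1 : ∫ x in (0:ℝ)..T, (x : ℂ) ^ ((p:ℂ) - 1) * ((T : ℂ) - x) ^ ((q:ℂ) - 1) =
      ((∫ t in (0:ℝ)..T, t ^ (p - 1) * (T - t) ^ (q - 1) : ℝ) : ℂ) := by
    rw [← intervalIntegral.integral_ofReal]
    apply intervalIntegral.integral_congr
    intro x hx
    rw [Set.uIcc_of_le hT.le] at hx
    simp only
    rw [Complex.ofReal_mul, Complex.ofReal_cpow hx.1, Complex.ofReal_cpow (by linarith [hx.2])]
    push_cast
    rfl
  rw [h1, h2] at h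
  apply Complex.ofReal_injective
  rw [h, Complex.ofReal_mul, Complex.ofReal_cpow hT.le]
  push_cast
  rfl

lemma beta_scaled_lint (p q T : ℝ) (hp : 1 < p) (hq : 1 < q) (hT : 0 ≤ T) :
    ∫⁻ t in Set.Icc (0:ℝ) T, ENNReal.ofReal (t ^ (p - 1) * (T - t) ^ (q - 1)) =
      ENNReal.ofReal (T ^ (p + q - 1) * (Gamma p * Gamma q / Gamma (p + q))) := by
  rcases hT.eq_or_lt with rfl | hT
  · simp [Real.zero_rpow (show p + q - 1 ≠ 0 by linarith)]
  rw [← beta_scaled_real p q T hp hq hT, intervalIntegral.integral_of_le hT.le,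
    ← integral_Icc_eq_integral_Ioc, ← ofReal_integral_eq_lintegral_ofReal]
  · apply ContinuousOn.integrableOn_Icc
    apply Continuous.continuousOn
    apply Continuous.mul
    · exact Real.continuous_rpow_const (by linarith)
    · exact (Real.continuous_rpow_const (by linarith)).comp (by fun_prop)
  · refine ae_restrict_of_forall_mem measurableSet_Icc (fun x hx ↦ ?_)
    exact mul_nonneg (Real.rpow_nonneg hx.1 _) (Real.rpow_nonneg (by linarith [hx.2]) _)

/-- Scaled simplex. -/
def STx (d : ℕ) (T : ℝ) : Set (Fin d → ℝ) := {x | (∀ i, 0 ≤ x i) ∧ ∑ i, x i ≤ T}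

lemma STx_meas (d : ℕ) (T : ℝ) : MeasurableSet (STx d T) := by
  unfold STx
  apply IsClosed.measurableSet
  have h1 : IsClosed {x : Fin d → ℝ | ∀ i, 0 ≤ x i} := by
    have : {x : Fin d → ℝ | ∀ i, 0 ≤ x i} = ⋂ i, {x : Fin d → ℝ | 0 ≤ x i} := by
      ext x; simp
    rw [this]
    exact isClosed_iInter fun i => isClosed_le continuous_const (continuous_apply i)
  have h2 : IsClosed {x : Fin d → ℝ | ∑ i, x i ≤ T} :=
    isClosed_le (by fun_prop) (by fun_prop)
  exact h1.inter h2

/-- Unnormalized Dirichlet density. -/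
noncomputable def dirF {d : ℕ} (u : Fin d → ℝ) (v T : ℝ) (x : Fin d → ℝ) : ℝ :=
  (T - ∑ i, x i) ^ (v - 1) * ∏ i, (x i) ^ (u i - 1)

lemma dirF_meas {d : ℕ} (u : Fin d → ℝ) (v T : ℝ) : Measurable (dirF u v T) := by
  unfold dirF
  fun_prop

lemma dirF_nonneg {d : ℕ} (u : Fin d → ℝ) (v T : ℝ) (x : Fin d → ℝ) (hx : x ∈ STx d T) :
    0 ≤ dirF u v T x := by
  apply mul_nonneg (Real.rpow_nonneg (by linarith [hx.2]) _)
  exact Finset.prod_nonneg (fun i _ => Real.rpow_nonneg (hx.1 i) _)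

lemma dir_lint : ∀ (d : ℕ) (u : Fin d → ℝ) (v T : ℝ) (_ : ∀ i, 1 < u i) (_ : 1 < v) (_ : 0 ≤ T),
    ∫⁻ x in STx d T, ENNReal.ofReal (dirF u v T x) =
      ENNReal.ofReal (T ^ ((∑ i, u i) + v - 1) *
        ((∏ i, Gamma (u i)) * Gamma v / Gamma ((∑ i, u i) + v))) := by
  intro d
  induction d with
  | zero =>
    intro u v T hu hv hT
    have h1 : STx 0 T = Set.univ := by
      ext x; simp [STx, hT]
    have h2 : Gamma v ≠ 0 := (Real.Gamma_pos_of_pos (by linarith)).ne'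
    rw [h1]
    simp [dirF, h2, MeasureTheory.lintegral_unique, volume_pi]
  | succ d ih =>
    intro u v T hu hv hT
    have hmp := (volume_preserving_piFinSuccAbove (fun _ : Fin (d + 1) => ℝ) 0).symm
    rw [← lintegral_indicator (STx_meas _ _)]
    rw [← hmp.lintegral_comp_emb (MeasurableEquiv.measurableEmbedding _)]
    have hmeas : Measurable fun a : ℝ × (Fin d → ℝ) => (STx (d+1) T).indicator
        (fun x => ENNReal.ofReal (dirF u v T x))
        ((MeasurableEquiv.piFinSuccAbove (fun _ : Fin (d + 1) => ℝ) 0).symm a) := by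
      exact ((dirF_meas u v T).ennreal_ofReal.indicator (STx_meas _ _)).comp
        (MeasurableEquiv.measurable _)
    rw [Measure.volume_eq_prod, lintegral_prod _ hmeas.aemeasurable]
    set U : Fin d → ℝ := fun i => u i.succ with hU
    have hq : 1 < (∑ i, U i) + v := by
      have : 0 ≤ ∑ i, U i := Finset.sum_nonneg (fun i _ => by have := hu i.succ; simp only [hU]; linarith)
      linarith
    set c := (∏ i, Gamma (U i)) * Gamma v / Gamma ((∑ i, U i) + v) with hc
    have hcpos : 0 ≤ c := by
      refine div_nonneg (mul_nonneg (Finset.prod_nonneg fun i _ => ?_) ?_) ?_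
      · exact (Real.Gamma_pos_of_pos (by have := hu i.succ; simp only [hU]; linarith)).le
      · exact (Real.Gamma_pos_of_pos (by linarith)).le
      · exact (Real.Gamma_pos_of_pos (by linarith)).le
    have key : ∀ t : ℝ, (∫⁻ y : Fin d → ℝ, (STx (d+1) T).indicator
        (fun x => ENNReal.ofReal (dirF u v T x))
        ((MeasurableEquiv.piFinSuccAbove (fun _ : Fin (d + 1) => ℝ) 0).symm (t, y))) =
        (Set.Icc (0:ℝ) T).indicator (fun t => ENNReal.ofReal c * ENNReal.ofReal
          (t ^ (u 0 - 1) * (T - t) ^ ((∑ i, U i) + v - 1))) t := by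
      intro t
      have hcons : ∀ y : Fin d → ℝ, (MeasurableEquiv.piFinSuccAbove (fun _ : Fin (d + 1) => ℝ) 0).symm (t, y)
          = Fin.cons t y := by
        intro y
        simp [MeasurableEquiv.piFinSuccAbove]
        rfl
      simp only [hcons]
      by_cases ht : t ∈ Set.Icc (0:ℝ) T
      · rw [Set.indicator_of_mem ht]
        have : ∀ y : Fin d → ℝ, (STx (d+1) T).indicator
            (fun x => ENNReal.ofReal (dirF u v T x)) (Fin.cons t y) =
            ENNReal.ofReal (t ^ (u 0 - 1)) * (STx d (T - t)).indicator
            (fun x => ENNReal.ofReal (dirF U v (T - t) x)) y := by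
          intro y
          have hiff : (Fin.cons t y : Fin (d+1) → ℝ) ∈ STx (d+1) T ↔ y ∈ STx d (T - t) := by
            simp only [STx, Set.mem_ofPred_eq, Fin.forall_fin_succ, Fin.cons_zero, Fin.cons_succ,
              Fin.sum_univ_succ, ht.1, true_and]
            constructor
            · rintro ⟨h1, h2⟩; exact ⟨h1, by linarith⟩
            · rintro ⟨h1, h2⟩; exact ⟨h1, by linarith⟩
          by_cases hy : y ∈ STx d (T - t)
          · rw [Set.indicator_of_mem hy, Set.indicator_of_mem (hiff.2 hy),
              ← ENNReal.ofReal_mul (Real.rpow_nonneg ht.1 _)]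
            congr 1
            simp only [dirF, Fin.sum_univ_succ, Fin.prod_univ_succ, Fin.cons_zero, Fin.cons_succ, hU]
            rw [sub_sub]
            ring
          · rw [Set.indicator_of_notMem hy, Set.indicator_of_notMem (fun h => hy (hiff.1 h)),
              mul_zero]
        simp_rw [this]
        rw [lintegral_const_mul _ ((dirF_meas U v _).ennreal_ofReal.indicator (STx_meas _ _)),
          lintegral_indicator (STx_meas _ _), ih U v (T - t) (fun i => hu _) hv (by linarith [ht.2]),
          ← ENNReal.ofReal_mul (Real.rpow_nonneg ht.1 _), ← ENNReal.ofReal_mul hcpos]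
        congr 1
        rw [hc]; ring
      · rw [Set.indicator_of_notMem ht]
        have : ∀ y : Fin d → ℝ, (STx (d+1) T).indicator
            (fun x => ENNReal.ofReal (dirF u v T x)) (Fin.cons t y) = 0 := by
          intro y
          apply Set.indicator_of_notMem
          rintro ⟨h1, h2⟩
          apply ht
          refine ⟨by simpa using h1 0, ?_⟩
          rw [Fin.sum_univ_succ] at h2
          have : 0 ≤ ∑ i : Fin d, (Fin.cons t y : Fin (d+1) → ℝ) i.succ :=
            Finset.sum_nonneg fun i _ => h1 _
          simp only [Fin.cons_zero] at h2
          linarith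
        simp [this]
    simp_rw [key]
    rw [lintegral_indicator measurableSet_Icc, lintegral_const_mul _ (by fun_prop),
      beta_scaled_lint (u 0) _ T (hu 0) hq hT, ← ENNReal.ofReal_mul hcpos]
    congr 1
    have hg : Gamma ((∑ i, U i) + v) ≠ 0 := (Real.Gamma_pos_of_pos (by linarith)).ne'
    rw [Fin.sum_univ_succ, Fin.prod_univ_succ, hc]
    rw [show u 0 + ∑ i : Fin d, u i.succ + v = u 0 + (∑ i, U i + v) by simp only [hU]; ring]
    field_simp
    simp only [hU]
    ring

lemma Sd_eq (d : ℕ) : Sd d = STx d 1 := by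
  ext x
  simp only [Sd, STx, Set.mem_ofPred_eq]
  constructor
  · rintro ⟨h1, h2⟩; exact ⟨fun i => (h1 i).1, h2⟩
  · rintro ⟨h1, h2⟩
    exact ⟨fun i => ⟨h1 i, (Finset.single_le_sum (fun i _ => h1 i) (Finset.mem_univ i)).trans h2⟩, h2⟩

lemma dir_int {d : ℕ} (u : Fin d → ℝ) (v : ℝ) (hu : ∀ i, 1 < u i) (hv : 1 < v) :
    IntegrableOn (dirF u v 1) (Sd d) ∧ ∫ x in Sd d, dirF u v 1 x =
        ((∏ i, Gamma (u i)) * Gamma v / Gamma ((∑ i, u i) + v)) := by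
  have h := dir_lint d u v 1 hu hv zero_le_one
  rw [Real.one_rpow, one_mul] at h
  rw [Sd_eq]
  have hnn : 0 ≤ᵐ[volume.restrict (STx d 1)] dirF u v 1 :=
    ae_restrict_of_forall_mem (STx_meas _ _) (fun x hx ↦ dirF_nonneg u v 1 x hx)
  have hm : AEStronglyMeasurable (dirF u v 1) (volume.restrict (STx d 1)) :=
    (dirF_meas u v 1).aestronglyMeasurable
  constructor
  · refine ⟨hm, ?_⟩
    rw [hasFiniteIntegral_iff_ofReal hnn, h]
    exact ENNReal.ofReal_lt_top
  · rw [integral_eq_lintegral_of_nonneg_ae hnn hm, h, ENNReal.toReal_ofReal]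
    have : 0 ≤ ∑ i, u i := Finset.sum_nonneg (fun i _ => by linarith [hu i])
    refine div_nonneg (mul_nonneg (Finset.prod_nonneg fun i _ => ?_) ?_) ?_
    · exact (Real.Gamma_pos_of_pos (by linarith [hu i])).le
    · exact (Real.Gamma_pos_of_pos (by linarith)).le
    · exact (Real.Gamma_pos_of_pos (by linarith)).le

lemma Gamma_add_nat_prod (a : ℝ) (ha : 0 < a) (k : ℕ) :
    Gamma (a + k) = (∏ i ∈ Finset.range k, (a + i)) * Gamma a := by
  induction k with
  | zero => simp
  | succ k ih =>
    rw [Finset.prod_range_succ, Nat.cast_succ, ← add_assoc, Real.Gamma_add_one (by positivity), ih]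
    ring

lemma prod_ite_aux {d : ℕ} (j : Fin d) (f g : Fin d → ℝ) (c : ℝ)
    (h : ∀ i, f i = g i * (if i = j then c else 1)) : ∏ i, f i = c * ∏ i, g i := by
  rw [Finset.prod_congr rfl (fun i _ => h i), Finset.prod_mul_distrib, Finset.prod_ite_eq']
  simp [mul_comm]

lemma dir_moment {d : ℕ} (j : Fin d) (u : Fin d → ℝ) (v : ℝ) (hu : ∀ i, 1 < u i) (hv : 1 < v)
    (k : ℕ) :
    IntegrableOn (fun x => x j ^ k * Kdir u v x) (Sd d) ∧
    ∫ x in Sd d, x j ^ k * Kdir u v x =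
      (∏ i ∈ Finset.range k, (u j + i)) / ∏ i ∈ Finset.range k, ((∑ i, u i) + v + i) := by
  set u' : Fin d → ℝ := fun i => u i + if i = j then (k:ℝ) else 0 with hu'
  have hu1 : ∀ i, 1 < u' i := by
    intro i
    have := hu i
    simp only [hu']
    split_ifs
    · have : (0:ℝ) ≤ k := by positivity
      linarith
    · linarith
  have hS : 0 ≤ ∑ i, u i := Finset.sum_nonneg (fun i _ => by linarith [hu i])
  have hsum : (∑ i, u' i) + v = (∑ i, u i) + v + k := by
    simp only [hu', Finset.sum_add_distrib, Finset.sum_ite_eq', Finset.mem_univ, if_true]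
    ring
  have hprod : ∏ i, Gamma (u' i) = (∏ i ∈ Finset.range k, (u j + i)) * ∏ i, Gamma (u i) := by
    apply prod_ite_aux j
    intro i
    simp only [hu']
    split_ifs with h
    · subst h
      rw [Gamma_add_nat_prod _ (by linarith [hu i])]; ring
    · simp
  obtain ⟨h1, h2⟩ := dir_int u' v hu1 hv
  set A := Gamma ((∑ i, u i) + v) / (Gamma v * ∏ i, Gamma (u i)) with hA
  have heq : Set.EqOn (fun x => x j ^ k * Kdir u v x) (fun x => A * dirF u' v 1 x) (Sd d) := by
    intro x hx
    have : ∏ i, (x i) ^ (u' i - 1) = x j ^ k * ∏ i, (x i) ^ (u i - 1) := by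
      apply prod_ite_aux j
      intro i
      simp only [hu']
      split_ifs with h
      · subst h
        rw [← Real.rpow_natCast, ← Real.rpow_add_of_nonneg (hx.1 i).1 (by linarith [hu i]) (by positivity)]
        congr 1; ring
      · simp
    simp only [Kdir, dirF, this, ← hA]
    ring
  have hms : MeasurableSet (Sd d) := by rw [Sd_eq]; exact STx_meas _ _
  constructor
  · exact (integrableOn_congr_fun heq hms).2 (h1.const_mul A)
  · rw [setIntegral_congr_fun hms heq, integral_const_mul, h2, hsum, hprod,
      Gamma_add_nat_prod _ (by linarith), hA]
    have g1 : Gamma ((∑ i, u i) + v) ≠ 0 := (Real.Gamma_pos_of_pos (by linarith)).ne'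
    have g2 : Gamma v ≠ 0 := (Real.Gamma_pos_of_pos (by linarith)).ne'
    have g3 : ∏ i, Gamma (u i) ≠ 0 := Finset.prod_ne_zero_iff.2
      fun i _ => (Real.Gamma_pos_of_pos (by linarith [hu i])).ne'
    have g4 : ∏ i ∈ Finset.range k, ((∑ i, u i) + v + i) ≠ 0 := Finset.prod_ne_zero_iff.2
      fun i _ => by positivity
    field_simp

/-- Coefficient of `n ^ 0` in the numerator of the sixth central moment. -/
noncomputable def cf0 (s D : ℝ) : ℝ :=
    (720) + (-4320) * s + (-720) * s * D + (10800) * s^2 +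
    (3960) * s^2 * D + (360) * s^2 * D^2 + (-14400) * s^3 + (-8880) * s^3 * D +
    (-1800) * s^3 * D^2 + (-120) * s^3 * D^3 + (10800) * s^4 + (10260) * s^4 * D +
    (3570) * s^4 * D^2 + (540) * s^4 * D^3 + (30) * s^4 * D^4 + (-4320) * s^5 +
    (-6264) * s^5 * D + (-3480) * s^5 * D^2 + (-930) * s^5 * D^3 + (-120) * s^5 * D^4 +
    (-6) * s^5 * D^5 + (720) * s^6 + (1764) * s^6 * D + (1624) * s^6 * D^2 +
    (735) * s^6 * D^3 + (175) * s^6 * D^4 + (21) * s^6 * D^5 + (1) * s^6 * D^6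

/-- Coefficient of `n ^ 1` in the numerator of the sixth central moment. -/
noncomputable def cf1 (s D : ℝ) : ℝ :=
    (1044) * s + (-5904) * s^2 + (-924) * s^2 * D + (13620) * s^3 +
    (4650) * s^3 * D + (390) * s^3 * D^2 + (-16140) * s^4 + (-9140) * s^4 * D +
    (-1680) * s^4 * D^2 + (-100) * s^4 * D^3 + (9936) * s^5 + (8430) * s^5 * D +
    (2565) * s^5 * D^2 + (330) * s^5 * D^3 + (15) * s^5 * D^4 + (-2556) * s^6 +
    (-3016) * s^6 * D + (-1275) * s^6 * D^2 + (-230) * s^6 * D^3 + (-15) * s^6 * D^4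

/-- Coefficient of `n ^ 2` in the numerator of the sixth central moment. -/
noncomputable def cf2 (s D : ℝ) : ℝ :=
    (340) * s^2 + (-1650) * s^3 + (-210) * s^3 * D + (3040) * s^4 +
    (795) * s^4 * D + (45) * s^4 * D^2 + (-2490) * s^5 + (-960) * s^5 * D +
    (-90) * s^5 * D^2 + (760) * s^6 + (375) * s^6 * D + (45) * s^6 * D^2

/-- Coefficient of `n ^ 3` in the numerator of the sixth central moment. -/
noncomputable def cf3 (s D : ℝ) : ℝ :=
    (15) * s^3 + (-45) * s^4 + (45) * s^5 + (-15) * s^6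

lemma num_identity (n s D : ℝ) :
    s ^ 6 * ((n + D + 1) * (n + D + 2) * (n + D + 3) * (n + D + 4) * (n + D + 5) * (n + D + 6))
    - 6 * s ^ 5 * ((n * s + 1) *
        ((n + D + 2) * (n + D + 3) * (n + D + 4) * (n + D + 5) * (n + D + 6)))
    + 15 * s ^ 4 * ((n * s + 1) * (n * s + 2) *
        ((n + D + 3) * (n + D + 4) * (n + D + 5) * (n + D + 6)))
    - 20 * s ^ 3 * ((n * s + 1) * (n * s + 2) * (n * s + 3) *
        ((n + D + 4) * (n + D + 5) * (n + D + 6)))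
    + 15 * s ^ 2 * ((n * s + 1) * (n * s + 2) * (n * s + 3) * (n * s + 4) *
        ((n + D + 5) * (n + D + 6)))
    - 6 * s * ((n * s + 1) * (n * s + 2) * (n * s + 3) * (n * s + 4) * (n * s + 5) * (n + D + 6))
    + (n * s + 1) * (n * s + 2) * (n * s + 3) * (n * s + 4) * (n * s + 5) * (n * s + 6)
    = cf0 s D + cf1 s D * n + cf2 s D * n ^ 2 + cf3 s D * n ^ 3 := by
  unfold cf0 cf1 cf2 cf3
  ring

lemma central_expand {d : ℕ} (j : Fin d) (s : Fin d → ℝ) (b : ℝ) (hb : 0 < b)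
    (hs : s ∈ SdInt d) (k : ℕ) :
    IntegrableOn (fun x => x j ^ k * kappa s b x) (Sd d) ∧
    ∫ x in Sd d, x j ^ k * kappa s b x =
      (∏ i ∈ Finset.range k, (b⁻¹ * s j + 1 + i)) /
        ∏ i ∈ Finset.range k, (b⁻¹ + d + 1 + 1 + i - 1) := by
  have h := dir_moment j (fun i => s i / b + 1) ((1 - ∑ i, s i) / b + 1)
    (fun i => by have := div_pos (hs.1 i) hb; linarith)
    (by have := div_pos (sub_pos.2 hs.2) hb; linarith) k
  refine ⟨h.1, ?_⟩
  have h2 := h.2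
  unfold kappa
  rw [h2]
  have e1 : (∑ i, (s i / b + 1)) + ((1 - ∑ i, s i) / b + 1) = b⁻¹ + d + 1 := by
    rw [Finset.sum_add_distrib, ← Finset.sum_div]
    simp only [Finset.sum_const, Finset.card_univ, Fintype.card_fin, nsmul_eq_mul, mul_one]
    field_simp
    ring
  rw [e1]
  congr 1
  · apply Finset.prod_congr rfl
    intro i _
    field_simp
  · apply Finset.prod_congr rfl
    intro i _
    ring

lemma sixth_bound {d : ℕ} (j : Fin d) (s : Fin d → ℝ) (b : ℝ) (hb : 0 < b) (hb1 : b < 1)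
    (hs : s ∈ SdInt d) :
    ∫ x in Sd d, |x j - s j| ^ 6 * kappa s b x ≤
      (|cf0 (s j) d| + |cf1 (s j) d| + |cf2 (s j) d| + |cf3 (s j) d| + 1) * b ^ 3 := by
  have M := central_expand j s b hb hs
  have hfun : ∀ x : Fin d → ℝ, |x j - s j| ^ 6 * kappa s b x =
      s j ^ 6 * (x j ^ 0 * kappa s b x) + (-6 * s j ^ 5) * (x j ^ 1 * kappa s b x) +
      (15 * s j ^ 4) * (x j ^ 2 * kappa s b x) + (-20 * s j ^ 3) * (x j ^ 3 * kappa s b x) +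
      (15 * s j ^ 2) * (x j ^ 4 * kappa s b x) + (-6 * s j) * (x j ^ 5 * kappa s b x) +
      x j ^ 6 * kappa s b x := by
    intro x
    rw [Even.pow_abs (by decide)]
    ring
  have I0 := (M 0).1.const_mul (s j ^ 6)
  have I1 := (M 1).1.const_mul (-6 * s j ^ 5)
  have I2 := (M 2).1.const_mul (15 * s j ^ 4)
  have I3 := (M 3).1.const_mul (-20 * s j ^ 3)
  have I4 := (M 4).1.const_mul (15 * s j ^ 2)
  have I5 := (M 5).1.const_mul (-6 * s j)
  have J1 := Integrable.fun_add I0 I1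
  have J2 := Integrable.fun_add J1 I2
  have J3 := Integrable.fun_add J2 I3
  have J4 := Integrable.fun_add J3 I4
  have J5 := Integrable.fun_add J4 I5
  simp_rw [hfun]
  rw [integral_add J5 (M 6).1, integral_add J4 I5, integral_add J3 I4, integral_add J2 I3,
    integral_add J1 I2, integral_add I0 I1]
  simp only [integral_const_mul]
  rw [(M 0).2, (M 1).2, (M 2).2, (M 3).2, (M 4).2, (M 5).2, (M 6).2]
  have hid := num_identity b⁻¹ (s j) d
  have hn1 : 1 ≤ b⁻¹ := (one_le_inv₀ hb).2 hb1.le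
  have hbn : b = (b⁻¹)⁻¹ := (inv_inv b).symm
  set n := b⁻¹ with hn
  rw [hbn]
  set D : ℝ := (d : ℝ) with hD
  have hD0 : 0 ≤ D := by positivity
  set t := s j
  clear_value n D t
  simp only [Finset.prod_range_succ, Finset.prod_range_zero]
  push_cast
  have hden : n ^ 6 ≤ (n + D + 1) * (n + D + 2) * (n + D + 3) * (n + D + 4) * (n + D + 5) * (n + D + 6) := by
    rw [show n ^ 6 = n * n * n * n * n * n by ring]
    gcongr <;> linarith
  have hnum : cf0 t D + cf1 t D * n + cf2 t D * n ^ 2 + cf3 t D * n ^ 3 ≤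
      (|cf0 t D| + |cf1 t D| + |cf2 t D| + |cf3 t D| + 1) * n ^ 3 := by
    have e1 : n ≤ n ^ 3 := le_self_pow₀ hn1 (by norm_num)
    have e2 : n ^ 2 ≤ n ^ 3 := pow_le_pow_right₀ hn1 (by norm_num)
    have e0 : 1 ≤ n ^ 3 := one_le_pow₀ hn1
    have a0 : cf0 t D ≤ |cf0 t D| * n ^ 3 :=
      (le_abs_self _).trans (le_mul_of_one_le_right (abs_nonneg _) e0)
    have a1 : cf1 t D * n ≤ |cf1 t D| * n ^ 3 :=
      mul_le_mul (le_abs_self _) e1 (by linarith) (abs_nonneg _)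
    have a2 : cf2 t D * n ^ 2 ≤ |cf2 t D| * n ^ 3 :=
      mul_le_mul (le_abs_self _) e2 (by positivity) (abs_nonneg _)
    have a3 : cf3 t D * n ^ 3 ≤ |cf3 t D| * n ^ 3 :=
      mul_le_mul (le_abs_self _) le_rfl (by positivity) (abs_nonneg _)
    linarith
  have hn0 : 0 < n := by linarith
  set C := |cf0 t D| + |cf1 t D| + |cf2 t D| + |cf3 t D| + 1 with hC
  have hC0 : 0 ≤ C := by positivity
  rw [← hid] at hnum
  have p1 : n + D + 1 ≠ 0 := by positivity
  have p2 : n + D + 2 ≠ 0 := by positivity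
  have p3 : n + D + 3 ≠ 0 := by positivity
  have p4 : n + D + 4 ≠ 0 := by positivity
  have p5 : n + D + 5 ≠ 0 := by positivity
  have p6 : n + D + 6 ≠ 0 := by positivity
  refine le_trans (b := (C * n ^ 3) /
    ((n + D + 1) * (n + D + 2) * (n + D + 3) * (n + D + 4) * (n + D + 5) * (n + D + 6))) ?_ ?_
  · refine le_trans (le_of_eq ?_) (div_le_div_of_nonneg_right hnum (by positivity))
    rw [show n + D + 1 + 1 + 0 - 1 = n + D + 1 by ring,
      show n + D + 1 + 1 + 1 - 1 = n + D + 2 by ring,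
      show n + D + 1 + 1 + 2 - 1 = n + D + 3 by ring,
      show n + D + 1 + 1 + 3 - 1 = n + D + 4 by ring,
      show n + D + 1 + 1 + 4 - 1 = n + D + 5 by ring,
      show n + D + 1 + 1 + 5 - 1 = n + D + 6 by ring]
    rw [show n * t + 1 + 0 = n * t + 1 by ring,
      show n * t + 1 + 1 = n * t + 2 by ring,
      show n * t + 1 + 2 = n * t + 3 by ring,
      show n * t + 1 + 3 = n * t + 4 by ring,
      show n * t + 1 + 4 = n * t + 5 by ring,
      show n * t + 1 + 5 = n * t + 6 by ring]
    generalize n + D + 1 = q1 at *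
    generalize n + D + 2 = q2 at *
    generalize n + D + 3 = q3 at *
    generalize n + D + 4 = q4 at *
    generalize n + D + 5 = q5 at *
    generalize n + D + 6 = q6 at *
    generalize n * t + 1 = r1 at *
    generalize n * t + 2 = r2 at *
    generalize n * t + 3 = r3 at *
    generalize n * t + 4 = r4 at *
    generalize n * t + 5 = r5 at *
    generalize n * t + 6 = r6 at *
    field_simp
    ring
  · refine (div_le_div_of_nonneg_left (by positivity) (by positivity) hden).trans (le_of_eq ?_)
    field_simp

lemma sixth_bound_two {d : ℕ} (j : Fin d) (s : Fin d → ℝ) (b L : ℝ) (hb : 0 < b)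
    (hL : s j / b ≤ L) (hs : s ∈ SdInt d) :
    ∫ x in Sd d, |x j - s j| ^ 6 * kappa s b x ≤ (32 * (L + 6) ^ 6 + 32 * L ^ 6) * b ^ 6 := by
  have M := central_expand j s b hb hs
  have hms : MeasurableSet (Sd d) := by rw [Sd_eq]; exact STx_meas _ _
  have hsj : 0 < s j := hs.1 j
  have hL0 : 0 < L := (div_pos hsj hb).trans_le hL
  have hsL : s j ≤ L * b := (div_le_iff₀ hb).1 hL
  have hk : ∀ x ∈ Sd d, 0 ≤ kappa s b x := by
    intro x hx
    have hS := hs.2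
    have : 0 ≤ ∑ i, (s i / b + 1) :=
      Finset.sum_nonneg fun i _ => by have := div_pos (hs.1 i) hb; linarith
    have h1 := div_pos (sub_pos.2 hS) hb
    unfold kappa Kdir
    refine mul_nonneg (mul_nonneg (div_nonneg ?_ (mul_nonneg ?_ ?_)) ?_) ?_
    · exact (Real.Gamma_pos_of_pos (by linarith)).le
    · exact (Real.Gamma_pos_of_pos (by linarith)).le
    · exact Finset.prod_nonneg fun i _ =>
        (Real.Gamma_pos_of_pos (by have := div_pos (hs.1 i) hb; linarith)).le
    · exact Real.rpow_nonneg (by linarith [hx.2]) _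
    · exact Finset.prod_nonneg fun i _ => Real.rpow_nonneg (hx.1 i).1 _
  have I0 := (M 0).1.const_mul (32 * s j ^ 6)
  have I6 := (M 6).1.const_mul 32
  have hle : ∫ x in Sd d, |x j - s j| ^ 6 * kappa s b x ≤
      ∫ x in Sd d, (32 * (x j ^ 6 * kappa s b x) + 32 * s j ^ 6 * (x j ^ 0 * kappa s b x)) := by
    apply integral_mono_of_nonneg
    · exact ae_restrict_of_forall_mem hms fun x hx => mul_nonneg (by positivity) (hk x hx)
    · exact I6.add I0
    · refine ae_restrict_of_forall_mem hms fun x hx => ?_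
      have h0 := (hx.1 j).1
      have h1 : |x j - s j| ≤ x j + s j := by
        rw [abs_le]; constructor <;> linarith
      have h2 : |x j - s j| ^ 6 ≤ 32 * (x j ^ 6 + s j ^ 6) := by
        refine (pow_le_pow_left₀ (abs_nonneg _) h1 6).trans ?_
        have := add_pow_le h0 hsj.le 6
        norm_num at this
        exact this
      have := mul_le_mul_of_nonneg_right h2 (hk x hx)
      simp only
      linarith
  refine hle.trans ?_
  rw [integral_add I6 I0]
  simp only [integral_const_mul]
  rw [(M 0).2, (M 6).2]
  have hden : (b⁻¹) ^ 6 ≤ ∏ i ∈ Finset.range 6, (b⁻¹ + d + 1 + 1 + (i:ℝ) - 1) := by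
    rw [show (b⁻¹) ^ 6 = ∏ i ∈ Finset.range 6, b⁻¹ by simp]
    apply Finset.prod_le_prod
    · intro i _; positivity
    · intro i _
      have : (0:ℝ) ≤ d := by positivity
      have : (0:ℝ) ≤ i := by positivity
      linarith
  have hnum : ∏ i ∈ Finset.range 6, (b⁻¹ * s j + 1 + (i:ℝ)) ≤ (L + 6) ^ 6 := by
    rw [show (L + 6) ^ 6 = ∏ i ∈ Finset.range 6, (L + 6) by simp]
    apply Finset.prod_le_prod
    · intro i _; positivity
    · intro i hi
      have hi : (i:ℝ) ≤ 5 := by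
        have := Finset.mem_range.1 hi
        exact_mod_cast (show i ≤ 5 by omega)
      rw [div_eq_inv_mul] at hL
      linarith
  have h6 : (∏ i ∈ Finset.range 6, (b⁻¹ * s j + 1 + (i:ℝ))) /
      (∏ i ∈ Finset.range 6, (b⁻¹ + d + 1 + 1 + (i:ℝ) - 1)) ≤ (L + 6) ^ 6 * b ^ 6 := by
    refine (div_le_div₀ (by positivity) hnum (by positivity) hden).trans (le_of_eq ?_)
    field_simp
  have hs6 : s j ^ 6 ≤ L ^ 6 * b ^ 6 := by
    rw [← mul_pow]
    exact pow_le_pow_left₀ hsj.le hsL 6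
  simp only [Finset.prod_range_zero, div_one, mul_one]
  linarith

/-- sixth absolute central moments of the Dirichlet kernel. -/
theorem dirichlet_sixth_moment_bounds (d : ℕ) (hd : 0 < d) (j : Fin d) :
    (∀ s ∈ SdInt d, ∃ C > (0 : ℝ), ∃ b₀ > (0 : ℝ), ∀ b ∈ Set.Ioo (0 : ℝ) b₀,
      (∫ x in Sd d, |x j - s j| ^ 6 * kappa s b x) ≤ C * b ^ 3) ∧
    (∀ lamj : ℝ, 0 < lamj → ∀ s : ℝ → Fin d → ℝ, (∀ b : ℝ, 0 < b → s b ∈ SdInt d) →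
      Tendsto (fun b : ℝ => s b j / b) (nhdsWithin 0 (Set.Ioi 0)) (nhds lamj) →
      ∃ C > (0 : ℝ), ∃ b₀ > (0 : ℝ), ∀ b ∈ Set.Ioo (0 : ℝ) b₀,
        (∫ x in Sd d, |x j - s b j| ^ 6 * kappa (s b) b x) ≤ C * b ^ 6) := by
  constructor
  · intro s hs
    refine ⟨_, ?_, 1, one_pos, fun b hb => sixth_bound j s b hb.1 hb.2 hs⟩
    positivity
  · intro lam hlam s hs hlim
    have hev := hlim.eventually (eventually_le_nhds (show lam < lam + 1 by linarith))
    rw [eventually_nhdsWithin_iff, Metric.eventually_nhds_iff] at hev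
    obtain ⟨ε, hε, h⟩ := hev
    refine ⟨32 * (lam + 1 + 6) ^ 6 + 32 * (lam + 1) ^ 6, by positivity, ε, hε, fun b hb => ?_⟩
    refine sixth_bound_two j (s b) b (lam + 1) hb.1 (h ?_ hb.1) (hs b hb.1)
    rw [Real.dist_eq, sub_zero, abs_of_pos hb.1]
    exact hb.2
end
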